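/- arXiv:1006.5636 — 2 statements merged into one kernel-verified Lean document; each statement's English description precedes it below -/
import Mathlib

section
/- Let L be a finite-dimensional Lie algebra over a field F and let M be a maximal subalgebra of L. Then M is a c-ideal of L if and only if every ideal completion C of M in L satisfies dim(C/k(C)) = dim L − dim M. -/
/-- The strict core `k(B)` of a subalgebra `B` of `L`: the sum of all ideals of `L` that are
proper subalgebras of `B`. -/
def strictCore {F L : Type*} [Field F] [LieRing L] [LieAlgebra F L]
    (B : LieSubalgebra F L) : LieIdeal F L :=
  sSup {I : LieIdeal F L | (I : LieSubalgebra F L) < B}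

/-- `C` is a completion of the maximal subalgebra `M` of `L` if `C` is not contained in `M`
but every proper subalgebra of `C` that is an ideal of `L` is contained in `M`.
The set of completions of `M` is the index complex `I(M)`. -/
def IsCompletion {F L : Type*} [Field F] [LieRing L] [LieAlgebra F L]
    (M C : LieSubalgebra F L) : Prop :=
  ¬ C ≤ M ∧ ∀ I : LieIdeal F L, (I : LieSubalgebra F L) < C → (I : LieSubalgebra F L) ≤ M

/-- A maximal completion of `M`: a maximal element of the index complex `I(M)` under inclusion. -/
def IsMaxCompletion {F L : Type*} [Field F] [LieRing L] [LieAlgebra F L]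
    (M C : LieSubalgebra F L) : Prop :=
  IsCompletion M C ∧ ∀ D : LieSubalgebra F L, IsCompletion M D → C ≤ D → C = D

/-- The quotient of a subalgebra `C` of `L` by (the pullback along the inclusion of) an ideal
`K` of `L`. -/
abbrev quotIn {F L : Type*} [Field F] [LieRing L] [LieAlgebra F L]
    (C : LieSubalgebra F L) (K : LieIdeal F L) : Type _ :=
  C ⧸ LieIdeal.comap C.incl K

/-- The quotient Lie algebra `C / k(C)`. -/
abbrev quotCore {F L : Type*} [Field F] [LieRing L] [LieAlgebra F L]
    (C : LieSubalgebra F L) : Type _ :=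
  quotIn C (strictCore C)

/-- The largest ideal of `L` contained in the subalgebra `B`, denoted `B_L`. -/
def idealCore {F L : Type*} [Field F] [LieRing L] [LieAlgebra F L]
    (B : LieSubalgebra F L) : LieIdeal F L :=
  sSup {I : LieIdeal F L | (I : LieSubalgebra F L) ≤ B}

/-- A subalgebra `B` of `L` is a c-ideal of `L` if there is an ideal `C` of `L` such that
`L = B + C` and `B ∩ C ≤ B_L`. -/
def IsCIdeal {F L : Type*} [Field F] [LieRing L] [LieAlgebra F L]
    (B : LieSubalgebra F L) : Prop :=
  ∃ C : LieIdeal F L, B ⊔ (C : LieSubalgebra F L) = ⊤ ∧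
    B ⊓ (C : LieSubalgebra F L) ≤ (idealCore B : LieSubalgebra F L)

/-- A Lie algebra is supersolvable if it has a chain of ideals
`0 = I_0 ⊆ I_1 ⊆ ... ⊆ I_n = L` with `dim I_j = j` for each `j`. -/
def IsSupersolvableLieAlgebra (F L : Type*) [Field F] [LieRing L] [LieAlgebra F L] : Prop :=
  ∃ (n : ℕ) (I : Fin (n + 1) → LieIdeal F L), I 0 = ⊥ ∧ I (Fin.last n) = ⊤ ∧
    Monotone I ∧ ∀ j : Fin (n + 1), Module.finrank F (I j) = (j : ℕ)

/-- The natural quotient map `L → L ⧸ B` as a morphism of Lie algebras. -/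
def lieQuotMk {F L : Type*} [Field F] [LieRing L] [LieAlgebra F L] (B : LieIdeal F L) :
    L →ₗ⁅F⁆ L ⧸ B :=
  { (LieSubmodule.Quotient.mk' B).toLinearMap with
    map_lie' := rfl }

/-- A subalgebra `C` of `L` is a subideal of `L` if there is a chain of subalgebras
`C = C_0 ⊆ C_1 ⊆ ... ⊆ C_n = L` in which each `C_i` is an ideal of `C_{i+1}`. -/
def IsSubideal {F L : Type*} [Field F] [LieRing L] [LieAlgebra F L]
    (C : LieSubalgebra F L) : Prop :=
  ∃ (n : ℕ) (f : Fin (n + 1) → LieSubalgebra F L), f 0 = C ∧ f (Fin.last n) = ⊤ ∧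
    ∀ i : Fin n, f i.castSucc ≤ f i.succ ∧
      ∀ x ∈ f i.succ, ∀ y ∈ f i.castSucc, ⁅x, y⁆ ∈ f i.castSucc

/-- The Frattini subalgebra: the intersection of all maximal subalgebras of `L`. -/
def frattiniSubalgebra (F L : Type*) [Field F] [LieRing L] [LieAlgebra F L] :
    LieSubalgebra F L :=
  sInf {M : LieSubalgebra F L | IsCoatom M}

/-- The Frattini ideal: the largest ideal of `L` contained in the Frattini subalgebra. -/
def frattiniIdeal (F L : Type*) [Field F] [LieRing L] [LieAlgebra F L] : LieIdeal F L :=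
  idealCore (frattiniSubalgebra F L)

/-!
If `C` is an ideal completion of `M`, then `k(C) = M_L ∩ C`. As `L = M + C`, the number
`dim L - dim M` is `dim C - dim (M ∩ C)`, so the dimension condition on `C` says exactly that
`M ∩ C ⊆ M_L`, i.e. that `C` itself witnesses that `M` is a c-ideal. An ideal minimal among those
not contained in `M` is a completion of `M`, so one such `C` exists.

Conversely let `B` be any witness that `M` is a c-ideal. If `C ⊆ B`, then `M ∩ C ⊆ M ∩ B ⊆ M_L`.
Otherwise `B ∩ C` is an ideal properly contained in `C`, hence `B ∩ C ⊆ M`; then both `M` and `B`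
normalize `M ∩ C`, which is therefore an ideal of `L = M + B`.
-/

section Ideals

variable {R L : Type*} [CommRing R] [LieRing L] [LieAlgebra R L]

theorem toSubmodule_sup_toLieSubalgebra (M : LieSubalgebra R L) (I : LieIdeal R L) :
    (M ⊔ (I : LieSubalgebra R L)).toSubmodule = M.toSubmodule ⊔ I.toSubmodule := by
  let S : LieSubalgebra R L :=
    { M.toSubmodule ⊔ I.toSubmodule with
      lie_mem' := by
        intro x y hx hy
        obtain ⟨m, hm, c, hc, rfl⟩ := Submodule.mem_sup.1 hx
        obtain ⟨n, hn, d, hd, rfl⟩ := Submodule.mem_sup.1 hy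
        refine Submodule.mem_sup.2 ⟨⁅m, n⁆, M.lie_mem hm hn, ⁅m, d⁆ + ⁅c, n + d⁆, ?_, ?_⟩
        · exact I.add_mem (lie_mem_right R L I m d hd) (lie_mem_left R L I c (n + d) hc)
        · rw [add_lie, lie_add m, add_assoc] }
  have sup_le_S : M ⊔ (I : LieSubalgebra R L) ≤ S :=
    sup_le (le_sup_left : M.toSubmodule ≤ _) (le_sup_right : I.toSubmodule ≤ _)
  exact le_antisymm sup_le_S
    (sup_le (le_sup_left : M ≤ M ⊔ I) (le_sup_right : (I : LieSubalgebra R L) ≤ M ⊔ I))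

theorem exists_lieIdeal_coe_eq_inf_of_sup_eq_top {M : LieSubalgebra R L} {B C : LieIdeal R L}
    (hMB : M ⊔ (B : LieSubalgebra R L) = ⊤)
    (hBC : ((B ⊓ C : LieIdeal R L) : LieSubalgebra R L) ≤ M) :
    ∃ I : LieIdeal R L, (I : LieSubalgebra R L) = M ⊓ (C : LieSubalgebra R L) := by
  have M_le_normalizer : M ≤ (M ⊓ (C : LieSubalgebra R L)).normalizer := fun m hm =>
    (LieSubalgebra.mem_normalizer_iff _ m).2 fun y hy =>
      ⟨M.lie_mem hm hy.1, lie_mem_right R L C m y hy.2⟩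
  have B_le_normalizer :
      (B : LieSubalgebra R L) ≤ (M ⊓ (C : LieSubalgebra R L)).normalizer := fun b hb =>
    (LieSubalgebra.mem_normalizer_iff _ b).2 fun y hy =>
      have lie_mem_C : ⁅b, y⁆ ∈ C := lie_mem_right R L C b y hy.2
      ⟨hBC ⟨lie_mem_left R L B b y hb, lie_mem_C⟩, lie_mem_C⟩
  have normalizer_eq_top : (M ⊓ (C : LieSubalgebra R L)).normalizer = ⊤ :=
    top_le_iff.1 (hMB ▸ sup_le M_le_normalizer B_le_normalizer)
  rw [LieSubalgebra.exists_lieIdeal_coe_eq_iff]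
  exact fun x y hy => LieSubalgebra.ideal_in_normalizer (normalizer_eq_top ▸ trivial) hy

end Ideals

section Completions

variable {F L : Type*} [Field F] [LieRing L] [LieAlgebra F L]

theorem idealCore_le (B : LieSubalgebra F L) : (idealCore B : LieSubalgebra F L) ≤ B := by
  rw [← LieSubalgebra.toSubmodule_le_toSubmodule, LieIdeal.toLieSubalgebra_toSubmodule, idealCore,
    LieSubmodule.sSup_toSubmodule]
  refine sSup_le ?_
  rintro _ ⟨I, hI, rfl⟩
  exact hI

theorem le_idealCore_iff {B : LieSubalgebra F L} {I : LieIdeal F L} :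
    I ≤ idealCore B ↔ (I : LieSubalgebra F L) ≤ B :=
  ⟨fun h _ hx => idealCore_le B (h hx), fun h => le_sSup h⟩

theorem IsCompletion.sup_eq_top {M C : LieSubalgebra F L} (hC : IsCompletion M C)
    (hM : IsCoatom M) : M ⊔ C = ⊤ :=
  hM.2 _ (left_lt_sup.2 hC.1)

theorem IsCompletion.strictCore_eq_idealCore_inf {M : LieSubalgebra F L} {C : LieIdeal F L}
    (hC : IsCompletion M (C : LieSubalgebra F L)) :
    strictCore (C : LieSubalgebra F L) = idealCore M ⊓ C := by
  refine le_antisymm (sSup_le fun I hI => le_inf (le_idealCore_iff.2 (hC.2 I hI)) hI.le) ?_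
  have inf_lt : idealCore M ⊓ C < C :=
    inf_lt_right.2 fun hle => hC.1 (le_idealCore_iff.1 hle)
  exact le_sSup inf_lt

theorem exists_lieIdeal_isCompletion [WellFoundedLT (LieIdeal F L)] {M : LieSubalgebra F L}
    (hM : M ≠ ⊤) : ∃ C : LieIdeal F L, IsCompletion M (C : LieSubalgebra F L) := by
  have top_not_le : ¬ ((⊤ : LieIdeal F L) : LieSubalgebra F L) ≤ M := by
    rwa [LieIdeal.top_toLieSubalgebra, top_le_iff]
  obtain ⟨C, hC⟩ := exists_minimal_of_wellFoundedLT
    (fun I : LieIdeal F L => ¬ (I : LieSubalgebra F L) ≤ M) ⟨⊤, top_not_le⟩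
  exact ⟨C, hC.prop, fun I hI => not_not.1 (hC.not_prop_of_lt hI)⟩

theorem IsCIdeal.inf_le_idealCore {M : LieSubalgebra F L} (hM : IsCIdeal M) {C : LieIdeal F L}
    (hC : IsCompletion M (C : LieSubalgebra F L)) :
    M ⊓ (C : LieSubalgebra F L) ≤ (idealCore M : LieSubalgebra F L) := by
  obtain ⟨B, hMB, hB⟩ := hM
  by_cases hCB : C ≤ B
  · exact (inf_le_inf_left M hCB).trans hB
  · have inf_lt : B ⊓ C < C := inf_lt_right.2 hCB
    obtain ⟨I, hI⟩ := exists_lieIdeal_coe_eq_inf_of_sup_eq_top hMB (hC.2 _ inf_lt)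
    exact hI ▸ le_idealCore_iff.2 (hI.le.trans inf_le_left)

theorem isCIdeal_iff_forall_inf_le_idealCore [WellFoundedLT (LieIdeal F L)]
    {M : LieSubalgebra F L} (hM : IsCoatom M) :
    IsCIdeal M ↔ ∀ C : LieIdeal F L, IsCompletion M (C : LieSubalgebra F L) →
      M ⊓ (C : LieSubalgebra F L) ≤ (idealCore M : LieSubalgebra F L) := by
  refine ⟨fun h _ hC => h.inf_le_idealCore hC, fun h => ?_⟩
  obtain ⟨C, hC⟩ := exists_lieIdeal_isCompletion hM.1
  exact ⟨C, hC.sup_eq_top hM, h C hC⟩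

end Completions

section Dimension

open Module

variable {F L : Type*} [Field F] [LieRing L] [LieAlgebra F L]

theorem finrank_sup_add_finrank_inf (M : LieSubalgebra F L) (I : LieIdeal F L)
    [FiniteDimensional F M] [FiniteDimensional F I] :
    finrank F (M ⊔ I : LieSubalgebra F L) + finrank F (M ⊓ I : LieSubalgebra F L) =
      finrank F M + finrank F I := by
  have h := Submodule.finrank_sup_add_finrank_inf_eq M.toSubmodule I.toSubmodule
  rwa [← toSubmodule_sup_toLieSubalgebra] at h

theorem finrank_quotIn_add_finrank {C : LieSubalgebra F L} [FiniteDimensional F C]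
    {K : LieIdeal F L} (hKC : (K : LieSubalgebra F L) ≤ C) :
    finrank F (quotIn C K) + finrank F K = finrank F C := by
  have finrank_comap :
      finrank F (K.toSubmodule.comap C.toSubmodule.subtype) = finrank F K.toSubmodule :=
    (Submodule.comapSubtypeEquivOfLe hKC).finrank_eq
  exact finrank_comap ▸ Submodule.finrank_quotient_add_finrank _

theorem finrank_quotIn_eq_sub_iff_inf_le [FiniteDimensional F L] {M : LieSubalgebra F L}
    {C K : LieIdeal F L} (hMC : M ⊔ (C : LieSubalgebra F L) = ⊤)
    (hK : (K : LieSubalgebra F L) ≤ M ⊓ (C : LieSubalgebra F L)) :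
    finrank F (quotIn (C : LieSubalgebra F L) K) = finrank F L - finrank F M ↔
      M ⊓ (C : LieSubalgebra F L) ≤ (K : LieSubalgebra F L) := by
  have finrank_inf : finrank F L + finrank F (M ⊓ C : LieSubalgebra F L) =
      finrank F M + finrank F C := by
    rw [← finrank_sup_add_finrank_inf, hMC]
    exact congrArg (· + _) (finrank_top F L).symm
  have finrank_quot : finrank F (quotIn (C : LieSubalgebra F L) K) + finrank F K = finrank F C :=
    finrank_quotIn_add_finrank (hK.trans inf_le_right)
  have finrank_M_le : finrank F M ≤ finrank F L := M.toSubmodule.finrank_le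
  constructor
  · intro h
    have finrank_eq : finrank F K = finrank F (M ⊓ C : LieSubalgebra F L) := by omega
    exact (Submodule.eq_of_le_of_finrank_eq hK finrank_eq).ge
  · intro h
    have finrank_eq : finrank F (M ⊓ C : LieSubalgebra F L) = finrank F K := by
      rw [le_antisymm h hK]
      rfl
    omega

theorem IsCompletion.finrank_quotCore_eq_sub_iff_inf_le [FiniteDimensional F L]
    {M : LieSubalgebra F L} {C : LieIdeal F L} (hC : IsCompletion M (C : LieSubalgebra F L))
    (hM : IsCoatom M) :
    finrank F (quotCore (C : LieSubalgebra F L)) = finrank F L - finrank F M ↔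
      M ⊓ (C : LieSubalgebra F L) ≤ (idealCore M : LieSubalgebra F L) := by
  have coe_inf : ((idealCore M ⊓ C : LieIdeal F L) : LieSubalgebra F L) = ↑(idealCore M) ⊓ ↑C := rfl
  have inf_le : ((idealCore M ⊓ C : LieIdeal F L) : LieSubalgebra F L) ≤ M ⊓ C :=
    inf_le_inf_right (C : LieSubalgebra F L) (idealCore_le M)
  unfold quotCore
  rw [hC.strictCore_eq_idealCore_inf,
    finrank_quotIn_eq_sub_iff_inf_le (hC.sup_eq_top hM) inf_le, coe_inf, le_inf_iff,
    and_iff_left inf_le_right]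

end Dimension

/-- A maximal subalgebra `M` of `L` is a c-ideal of `L` if and only if every
ideal completion `C` of `M` satisfies `dim (C/k(C)) = dim L - dim M`. -/
theorem statement4 {F L : Type*} [Field F] [LieRing L] [LieAlgebra F L] [FiniteDimensional F L]
    (M : LieSubalgebra F L) (hM : IsCoatom M) :
    IsCIdeal M ↔ ∀ C : LieIdeal F L, IsCompletion M (C : LieSubalgebra F L) →
      Module.finrank F (quotCore (C : LieSubalgebra F L)) =
        Module.finrank F L - Module.finrank F M := by
  have : WellFoundedLT (LieIdeal F L) := LieSubmodule.wellFoundedLT_of_isArtinian F L L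
  rw [isCIdeal_iff_forall_inf_le_idealCore hM]
  exact forall₂_congr fun C hC => (hC.finrank_quotCore_eq_sub_iff_inf_le hM).symm
end

section
/- Let L be a finite-dimensional Lie algebra over a field F. Then L is supersolvable if and only if for every maximal subalgebra M of L, every ideal completion C of M in L satisfies dim(C/k(C)) = 1. -/
/-!
An ideal completion `C` has its strict core as a maximal `L`-invariant subspace, so `C / k(C)` is a
chief factor, and chief factors of a supersolvable algebra are one-dimensional.

For the converse, build the flag of ideals from the top: suppose `L / A` is supersolvable and let
`A / K` be a chief factor. If some maximal subalgebra `M` contains `K` but not `A`, a minimal ideal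
`C ≤ A` with `C ≰ M` is an ideal completion of `M` and `C / k(C) ≅ A / K`, so `A / K` is
one-dimensional. Otherwise `A / K` lies in the Frattini subalgebra of `L / K`. For `x ∈ A` Fitting's
lemma writes `L` as the sum of `A` and the Engel subalgebra of `x`, so the latter is everything
modulo `K`, `A` acts nilpotently on `L / K` by Engel's theorem, and `A / K` is abelian. But an
abelian chief factor `A / K` of dimension other than one with `L / A` supersolvable is complemented
by a subalgebra (Barnes), which is impossible in the Frattini subalgebra.

The complement is found by climbing the flag above `A`. Let `b` span the next term `B` modulo `A`.
It acts on `A / K` either injectively or as zero. In the first case the stabilizer of the line of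
`b` modulo `K` is the complement. In the second case `B / K` is abelian and `A / K` has an
`L`-invariant complement `B' / K` in it, found by the same dichotomy applied to a flag
acting on `B / K`; then continue with `B / B'`.
-/

open LieAlgebra LieModule

section LinearAlgebra

variable {F V : Type*} [Field F] [AddCommGroup V] [Module F V]

theorem exists_linearForm_of_finrank_eq_add_one {U W : Submodule F V} (hUW : U ≤ W)
    (hrank : Module.finrank F W = Module.finrank F U + 1) :
    ∃ c ∈ W, ∃ f : V →ₗ[F] F, (∀ x ∈ U, f x = 0) ∧ f c = 1 ∧ ∀ x ∈ W, x - f x • c ∈ U := by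
  have : FiniteDimensional F W := Module.finite_of_finrank_eq_succ hrank
  obtain ⟨c, hcW, hcU⟩ := SetLike.exists_of_lt (lt_of_le_of_ne hUW fun h => by
    rw [h] at hrank
    omega)
  obtain ⟨g, hgc, hUg⟩ := Submodule.exists_le_ker_of_notMem hcU
  have hsup : U ⊔ F ∙ c = W := by
    have hle : U ⊔ F ∙ c ≤ W := sup_le hUW ((Submodule.span_singleton_le_iff_mem _ _).2 hcW)
    have : FiniteDimensional F ↥(U ⊔ F ∙ c) := Submodule.finiteDimensional_of_le hle
    refine Submodule.eq_of_le_of_finrank_le hle (hrank ▸ Nat.succ_le_of_lt ?_)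
    exact Submodule.finrank_lt_finrank_of_lt <| sup_comm (F ∙ c) U ▸
      (Submodule.covBy_span_singleton_sup hcU).lt
  refine ⟨c, hcW, (g c)⁻¹ • g, fun x hx => ?_, inv_mul_cancel₀ hgc, fun x hx => ?_⟩
  · rw [LinearMap.smul_apply, LinearMap.mem_ker.1 (hUg hx), smul_zero]
  · obtain ⟨u, hu, _, hz, rfl⟩ := Submodule.mem_sup.1 (hsup ▸ hx)
    obtain ⟨r, rfl⟩ := Submodule.mem_span_singleton.1 hz
    have hgu : g u = 0 := hUg hu
    have hr : (g c)⁻¹ * (r * g c) = r := by field_simp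
    simpa [hgu, hr] using hu

theorem exists_sub_apply_mem_of_injective_mod {K A : Submodule F V} [FiniteDimensional F A]
    (T : Module.End F V) (hTK : ∀ x ∈ K, T x ∈ K) (hTA : ∀ x ∈ A, T x ∈ A)
    (hinj : ∀ x ∈ A, T x ∈ K → x ∈ K) {a : V} (ha : a ∈ A) : ∃ a' ∈ A, a - T a' ∈ K := by
  let T' : Module.End F (A ⧸ K.comap A.subtype) :=
    Submodule.mapQ _ _ (T.restrict hTA) fun x hx => hTK x hx
  have hT' : Function.Injective T' := by
    refine (injective_iff_map_eq_zero T').2 fun q hq => ?_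
    obtain ⟨x, rfl⟩ := Submodule.mkQ_surjective _ q
    have hTx : T x ∈ K := (Submodule.Quotient.mk_eq_zero (K.comap A.subtype)).1 hq
    exact (Submodule.Quotient.mk_eq_zero (K.comap A.subtype)).2 (hinj x x.2 hTx)
  obtain ⟨q, hq⟩ := LinearMap.injective_iff_surjective.1 hT' (Submodule.mkQ _ ⟨a, ha⟩)
  obtain ⟨a', rfl⟩ := Submodule.mkQ_surjective _ q
  exact ⟨a', a'.2, (Submodule.Quotient.eq (K.comap A.subtype)).1 hq.symm⟩

end LinearAlgebra

section Representation

attribute [local instance] LieRing.ofAssociativeRing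

variable {F L V : Type*} [Field F] [LieRing L] [AddCommGroup V] [Module F V] [LieRingModule L V]

theorem finrank_lieSubmodule_sup_add_finrank_inf [FiniteDimensional F V]
    (N N' : LieSubmodule F L V) :
    Module.finrank F ↥(N ⊔ N') + Module.finrank F ↥(N ⊓ N') =
      Module.finrank F N + Module.finrank F N' := by
  have h := Submodule.finrank_sup_add_finrank_inf_eq N.toSubmodule N'.toSubmodule
  rwa [← LieSubmodule.sup_toSubmodule, ← LieSubmodule.inf_toSubmodule] at h

/-- The vector `v` is zero or a weight vector in `V / N`: its line in `V / N` is invariant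
under `L`. -/
def IsWeightVectorMod (N : LieSubmodule F L V) (v : V) : Prop :=
  ∀ t : L, ∃ μ : F, ⁅t, v⁆ - μ • v ∈ N

theorem exists_isWeightVectorMod_of_finrank_eq_add_one {J J' : LieSubmodule F L V} (hle : J ≤ J')
    (hrank : Module.finrank F J' = Module.finrank F J + 1) :
    ∃ c ∈ J', c ∉ J ∧ IsWeightVectorMod J c ∧ ∀ x ∈ J', ∃ r : F, x - r • c ∈ J := by
  obtain ⟨c, hc, f, hfJ, hfc, hf⟩ := exists_linearForm_of_finrank_eq_add_one
    (U := J.toSubmodule) (W := J'.toSubmodule) hle hrank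
  have hcJ : c ∉ J := fun h => one_ne_zero (hfc.symm.trans (hfJ c h))
  exact ⟨c, hc, hcJ, fun t => ⟨_, hf _ (J'.lie_mem hc)⟩, fun x hx => ⟨_, hf x hx⟩⟩

variable [LieAlgebra F L] [LieModule F L V]

theorem IsWeightVectorMod.exists_lieSubmodule_eq_sup_span {N : LieSubmodule F L V} {v : V}
    (hv : IsWeightVectorMod N v) :
    ∃ P : LieSubmodule F L V, P.toSubmodule = N.toSubmodule ⊔ F ∙ v := by
  refine ⟨{ N.toSubmodule ⊔ F ∙ v with lie_mem := ?_ }, rfl⟩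
  intro t m hm
  obtain ⟨n, hn, _, hz, rfl⟩ := Submodule.mem_sup.1 hm
  obtain ⟨r, rfl⟩ := Submodule.mem_span_singleton.1 hz
  obtain ⟨μ, hμ⟩ := hv t
  refine Submodule.mem_sup.2 ⟨⁅t, n⁆ + r • (⁅t, v⁆ - μ • v),
    add_mem (N.lie_mem hn) (N.smul_mem r hμ), (r * μ) • v,
    Submodule.smul_mem _ _ (Submodule.mem_span_singleton_self v), ?_⟩
  rw [lie_add, lie_smul, smul_sub, mul_smul]
  abel

theorem IsWeightVectorMod.finrank_eq_add_one_of_covBy [FiniteDimensional F V]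
    {K A : LieSubmodule F L V} {a : V} (h : IsWeightVectorMod K a) (hKA : K ⋖ A) (ha : a ∈ A)
    (haK : a ∉ K) : Module.finrank F A = Module.finrank F K + 1 := by
  obtain ⟨P, hP⟩ := h.exists_lieSubmodule_eq_sup_span
  have hKP : K.toSubmodule ≤ P.toSubmodule := hP ▸ le_sup_left
  have haP : F ∙ a ≤ P.toSubmodule := hP ▸ le_sup_right
  have hPA : P.toSubmodule ≤ A.toSubmodule :=
    hP ▸ sup_le hKA.le ((Submodule.span_singleton_le_iff_mem _ _).2 ha)
  have hPeq : P = A := (hKA.eq_or_eq hKP hPA).resolve_left fun hPK =>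
    haK (hPK ▸ (Submodule.span_singleton_le_iff_mem _ _).1 haP)
  have hdim := Submodule.finrank_sup_span_singleton (p := K.toSubmodule) haK
  rwa [← hP, hPeq] at hdim

variable (V) in
/-- The representation of `L` on `V` twisted by the character `-χ`. Its kernel vectors are the
vectors on which `L` acts through `χ`. -/
def twistedToEnd (χ : LieCharacter F L) : L →ₗ⁅F⁆ Module.End F V where
  toLinearMap := (toEnd F L V : L →ₗ[F] Module.End F V) - (χ : L →ₗ[F] F).smulRight 1
  map_lie' {s t} := by
    ext v
    change ⁅⁅s, t⁆, v⁆ - χ ⁅s, t⁆ • v = ⁅s, ⁅t, v⁆ - χ t • v⁆ - χ s • (⁅t, v⁆ - χ t • v) -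
      (⁅t, ⁅s, v⁆ - χ s • v⁆ - χ t • (⁅s, v⁆ - χ s • v))
    rw [lieCharacter_apply_lie, lie_lie, lie_sub, lie_sub, lie_smul, lie_smul]
    module

theorem twistedToEnd_apply (χ : LieCharacter F L) (t : L) (v : V) :
    twistedToEnd V χ t v = ⁅t, v⁆ - χ t • v :=
  rfl

theorem twistedToEnd_mem (χ : LieCharacter F L) (t : L) (N : LieSubmodule F L V) {v : V}
    (hv : v ∈ N) : twistedToEnd V χ t v ∈ N := by
  rw [twistedToEnd_apply]
  exact sub_mem (N.lie_mem hv) (N.smul_mem _ hv)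

/-- The elements of `J` act on `W / U` as the scalars given by the character `χ`. -/
def ActsThrough (χ : LieCharacter F L) (J : LieIdeal F L) (U W : LieSubmodule F L V) : Prop :=
  ∀ j ∈ J, ∀ v ∈ W, twistedToEnd V χ j v ∈ U

theorem actsThrough_zero_iff_lie_le {J : LieIdeal F L} {U W : LieSubmodule F L V} :
    ActsThrough 0 J U W ↔ ⁅J, W⁆ ≤ U := by
  simp only [ActsThrough, twistedToEnd_apply, LieHom.zero_apply, zero_smul, sub_zero,
    LieSubmodule.lie_le_iff]

theorem exists_actsThrough_top_of_finrank_eq_add_one {U W : LieSubmodule F L V} (hUW : U ≤ W)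
    (hrank : Module.finrank F W = Module.finrank F U + 1) :
    ∃ χ : LieCharacter F L, ActsThrough χ ⊤ U W := by
  obtain ⟨c, hcW, f, hfU, -, hf⟩ := exists_linearForm_of_finrank_eq_add_one
    (U := U.toSubmodule) (W := W.toSubmodule) hUW hrank
  have hlie (t : L) {v : V} (hv : v ∈ W) : f ⁅t, v⁆ = f ⁅t, c⁆ * f v := by
    have h := hfU _ (U.lie_mem (x := t) (hf v hv))
    rw [lie_sub, lie_smul, map_sub, map_smul, smul_eq_mul, sub_eq_zero] at h
    rw [h, mul_comm]
  let χ : LieCharacter F L :=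
    { toLinearMap := f ∘ₗ ((toEnd F L V : L →ₗ[F] Module.End F V).flip c)
      map_lie' := fun {s t} => by
        have h : f ⁅⁅s, t⁆, c⁆ = 0 := by
          rw [lie_lie, map_sub, hlie s (W.lie_mem hcW), hlie t (W.lie_mem hcW), mul_comm, sub_self]
        rw [LieRing.of_associative_ring_bracket, mul_comm, sub_self]
        exact h }
  refine ⟨χ, fun t _ v hv => ?_⟩
  have h : twistedToEnd V χ t v = ⁅t, v - f v • c⁆ + f v • (⁅t, c⁆ - f ⁅t, c⁆ • c) -
      f ⁅t, c⁆ • (v - f v • c) := by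
    rw [twistedToEnd_apply, show χ t = f ⁅t, c⁆ from rfl, lie_sub, lie_smul]
    module
  rw [h]
  exact sub_mem (add_mem (U.lie_mem (hf v hv)) (U.smul_mem _ (hf _ (W.lie_mem hcW))))
    (U.smul_mem _ (hf v hv))

namespace ActsThrough

variable {χ : LieCharacter F L} {J J' : LieIdeal F L} {K A B U W : LieSubmodule F L V} {c : L}

theorem isWeightVectorMod (h : ActsThrough χ ⊤ U W) {v : V} (hv : v ∈ W) :
    IsWeightVectorMod U v := fun t =>
  ⟨χ t, twistedToEnd_apply χ t v ▸ h t (LieSubmodule.mem_top t) v hv⟩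

theorem of_lie_le (h : ActsThrough χ J A B) (hJB : ⁅J, B⁆ ≤ K) (hKA : K ≤ A) (hAB : A < B) :
    ActsThrough χ J K B := by
  intro j hj v hv
  obtain ⟨b, hb, hbA⟩ := SetLike.exists_of_lt hAB
  have hlie {w : V} (hw : w ∈ B) : ⁅j, w⁆ ∈ K := hJB (LieSubmodule.lie_mem_lie hj hw)
  have hχj : χ j = 0 := by
    by_contra hne
    have hsub := sub_mem (hKA (hlie hb)) (h j hj b hb)
    rw [twistedToEnd_apply, sub_sub_cancel] at hsub
    exact hbA ((A.toSubmodule.smul_mem_iff hne).1 hsub)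
  rw [twistedToEnd_apply, hχj, zero_smul, sub_zero]
  exact hlie hv

theorem of_forall_exists_sub_smul_mem (hJ : ActsThrough χ J U W)
    (hJ' : ∀ x ∈ J', ∃ r : F, x - r • c ∈ J) (hc : ∀ v ∈ W, twistedToEnd V χ c v ∈ U) :
    ActsThrough χ J' U W := by
  intro x hx v hv
  obtain ⟨r, hr⟩ := hJ' x hx
  have h := add_mem (hJ _ hr v hv) (U.smul_mem r (hc v hv))
  rwa [map_sub, map_smul, LinearMap.sub_apply, LinearMap.smul_apply, sub_add_cancel] at h

theorem exists_twistedToEnd_comm_mem (hJ : ActsThrough χ J U W) (hc : IsWeightVectorMod J c)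
    (t : L) : ∃ μ : F, ∀ v ∈ W, twistedToEnd V χ t (twistedToEnd V χ c v) -
      twistedToEnd V χ c (twistedToEnd V χ t v) - μ • twistedToEnd V χ c v ∈ U := by
  obtain ⟨μ, hμ⟩ := hc t
  refine ⟨μ, fun v hv => ?_⟩
  have h := hJ _ hμ v hv
  rwa [map_sub, map_smul, LieHom.map_lie, Ring.lie_def] at h

/-- The elements of `W` on which, modulo `U`, the element `c` acts as the scalar `χ c`. They form
a Lie submodule because `c` is a weight vector modulo an ideal acting on `W / U` through `χ`. -/
def eigenspace (hJ : ActsThrough χ J U W) (hc : IsWeightVectorMod J c) : LieSubmodule F L V where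
  toSubmodule := W.toSubmodule ⊓ U.toSubmodule.comap (twistedToEnd V χ c)
  lie_mem := by
    rintro t v ⟨hvW, hvU : twistedToEnd V χ c v ∈ U⟩
    refine ⟨W.lie_mem hvW, ?_⟩
    obtain ⟨μ, hμ⟩ := hJ.exists_twistedToEnd_comm_mem hc t
    have htv : twistedToEnd V χ c (twistedToEnd V χ t v) ∈ U := by
      have h := sub_mem (sub_mem (twistedToEnd_mem χ t U hvU) (U.smul_mem μ hvU)) (hμ v hvW)
      convert h using 1
      abel
    have h := add_mem htv (U.smul_mem (χ t) hvU)
    rwa [← map_smul, ← map_add, twistedToEnd_apply χ t, sub_add_cancel] at h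

theorem forall_mem_or_injective_mod (hJ : ActsThrough χ J K A) (hc : IsWeightVectorMod J c)
    (hKA : K ⋖ A) :
    (∀ a ∈ A, twistedToEnd V χ c a ∈ K) ∨ ∀ a ∈ A, twistedToEnd V χ c a ∈ K → a ∈ K := by
  have hK : K ≤ hJ.eigenspace hc := fun x hx => ⟨hKA.le hx, twistedToEnd_mem χ c K hx⟩
  rcases hKA.eq_or_eq hK fun x hx => hx.1 with h | h
  · exact .inr fun a ha haK => h.le ⟨ha, haK⟩
  · exact .inl fun a ha => (h.ge ha).2

theorem exists_complement_of_injective_mod [FiniteDimensional F V] (hJ : ActsThrough χ J K B)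
    (hχ : ActsThrough χ ⊤ A B) (hAB : A ≤ B) (hKA : K ≤ A) (hc : IsWeightVectorMod J c)
    (hinj : ∀ a ∈ A, twistedToEnd V χ c a ∈ K → a ∈ K) :
    ∃ B' : LieSubmodule F L V, A ⊓ B' = K ∧ A ⊔ B' = B := by
  refine ⟨hJ.eigenspace hc, le_antisymm (fun a ha => hinj a ha.1 ha.2.2) fun x hx =>
    ⟨hKA hx, hAB (hKA hx), twistedToEnd_mem χ c K hx⟩, ?_⟩
  refine le_antisymm (sup_le hAB fun x hx => hx.1) fun v hv => ?_
  obtain ⟨a, ha, haK⟩ := exists_sub_apply_mem_of_injective_mod (K := K.toSubmodule)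
    (A := A.toSubmodule) (twistedToEnd V χ c) (fun _ => twistedToEnd_mem χ c K)
    (fun _ => twistedToEnd_mem χ c A) hinj (hχ c (LieSubmodule.mem_top c) v hv)
  rw [← map_sub] at haK
  exact (LieSubmodule.mem_sup _ _ _).2
    ⟨a, ha, v - a, ⟨sub_mem hv (hAB ha), haK⟩, add_sub_cancel a v⟩

theorem twistedToEnd_mem_of_finrank_ne [FiniteDimensional F V] (hJ : ActsThrough χ J K B)
    (hχ : ActsThrough χ ⊤ A B) (hKA : K ⋖ A)
    (hrank : Module.finrank F A ≠ Module.finrank F K + 1) (hc : IsWeightVectorMod J c)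
    (hA : ∀ a ∈ A, twistedToEnd V χ c a ∈ K) : ∀ v ∈ B, twistedToEnd V χ c v ∈ K := by
  intro v hv
  by_contra hvK
  have hweight : IsWeightVectorMod K (twistedToEnd V χ c v) := by
    intro t
    obtain ⟨μ, hμ⟩ := hJ.exists_twistedToEnd_comm_mem hc t
    refine ⟨μ + χ t, ?_⟩
    have h := add_mem (hμ v hv) (hA _ (hχ t (LieSubmodule.mem_top t) v hv))
    rw [twistedToEnd_apply χ t (twistedToEnd V χ c v)] at h
    convert h using 1
    module
  exact hrank (hweight.finrank_eq_add_one_of_covBy hKA (hχ c (LieSubmodule.mem_top c) v hv) hvK)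

end ActsThrough

end Representation

section Flag

variable {F L V : Type*} [Field F] [LieRing L] [LieAlgebra F L] [AddCommGroup V] [Module F V]
  [LieRingModule L V] [LieModule F L V]

/-- A chain of ideals of `L` from `J` up to `L` with one-dimensional factors exists, that is,
`L / J` is supersolvable. -/
inductive HasFlagAbove : LieIdeal F L → Prop
  | top : HasFlagAbove ⊤
  | step {J J' : LieIdeal F L} (hle : J ≤ J')
      (hrank : Module.finrank F J' = Module.finrank F J + 1) (h : HasFlagAbove J') :
      HasFlagAbove J

theorem HasFlagAbove.exists_chain {J : LieIdeal F L} (hJ : HasFlagAbove J) :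
    ∃ (n : ℕ) (I : Fin (n + 1) → LieIdeal F L), I 0 = J ∧ I (Fin.last n) = ⊤ ∧ Monotone I ∧
      ∀ j, Module.finrank F (I j) = Module.finrank F J + j := by
  induction hJ with
  | top => exact ⟨0, fun _ => ⊤, rfl, rfl, monotone_const, fun j => by rw [Fin.val_eq_zero]; rfl⟩
  | @step J J' hle hrank _ ih =>
    obtain ⟨n, I, h0, hlast, hmono, hdim⟩ := ih
    refine ⟨n + 1, Fin.cons J I, rfl, hlast, Fin.monotone_iff_le_succ.2 fun i => ?_, fun j => ?_⟩
    · cases i using Fin.cases with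
      | zero => exact hle.trans_eq h0.symm
      | succ i => exact hmono i.castSucc_le_succ
    · cases j using Fin.cases with
      | zero => rfl
      | succ j =>
        rw [Fin.cons_succ, hdim, hrank, Fin.val_succ]
        omega

theorem isSupersolvableLieAlgebra_iff_hasFlagAbove_bot :
    IsSupersolvableLieAlgebra F L ↔ HasFlagAbove (⊥ : LieIdeal F L) := by
  have hbot : Module.finrank F (⊥ : LieIdeal F L) = 0 := finrank_bot F L
  constructor
  · rintro ⟨n, I, h0, hlast, hmono, hdim⟩
    have hI (j : Fin (n + 1)) : HasFlagAbove (I j) := by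
      induction j using Fin.reverseInduction with
      | last => exact hlast ▸ .top
      | cast j ih =>
        refine .step (hmono j.castSucc_le_succ) ?_ ih
        rw [hdim, hdim, Fin.val_succ, Fin.val_castSucc]
    exact h0 ▸ hI 0
  · intro h
    obtain ⟨n, I, h0, hlast, hmono, hdim⟩ := h.exists_chain
    exact ⟨n, I, h0, hlast, hmono, fun j => by rw [hdim, hbot, zero_add]⟩

theorem hasFlagAbove_bot_of_forall_covBy [FiniteDimensional F L]
    (h : ∀ K A : LieIdeal F L, HasFlagAbove A → K ⋖ A →
      Module.finrank F A = Module.finrank F K + 1) : HasFlagAbove (⊥ : LieIdeal F L) := by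
  have : WellFoundedLT (LieIdeal F L) := LieSubmodule.wellFoundedLT_of_isArtinian F L L
  obtain ⟨A, hA, hmin⟩ := exists_minimal_of_wellFoundedLT
    (fun A : LieIdeal F L => HasFlagAbove A) ⟨⊤, .top⟩
  rcases eq_or_ne A ⊥ with rfl | hne
  · exact hA
  obtain ⟨K, -, hK⟩ := exists_le_covBy_of_lt (bot_lt_iff_ne_bot.2 hne)
  exact absurd (hmin (.step hK.le (h K A hA hK) hA) hK.le) hK.lt.not_ge

theorem HasFlagAbove.finrank_eq_add_one_of_inf_le [FiniteDimensional F L] {J K A : LieIdeal F L}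
    (hJ : HasFlagAbove J) (hKA : K ⋖ A) (hinf : A ⊓ J ≤ K) :
    Module.finrank F A = Module.finrank F K + 1 := by
  induction hJ with
  | top => exact absurd (inf_top_eq A ▸ hinf) hKA.lt.not_ge
  | @step J J' hle hrank _ ih =>
    by_cases hinf' : A ⊓ J' ≤ K
    · exact ih hinf'
    obtain ⟨a, ha, haK⟩ := SetLike.not_le_iff_exists.1 hinf'
    obtain ⟨χ, hχ⟩ := exists_actsThrough_top_of_finrank_eq_add_one hle hrank
    have hweight : IsWeightVectorMod K a := fun t =>
      ⟨χ t, hinf ⟨twistedToEnd_mem χ t A ha.1, hχ t (LieSubmodule.mem_top t) a ha.2⟩⟩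
    exact hweight.finrank_eq_add_one_of_covBy hKA ha.1 haK

theorem HasFlagAbove.exists_complement [FiniteDimensional F V] {χ : LieCharacter F L}
    {J : LieIdeal F L} {K A B : LieSubmodule F L V} (hflag : HasFlagAbove J) (hKA : K ⋖ A)
    (hrank : Module.finrank F A ≠ Module.finrank F K + 1) (hAB : A ≤ B)
    (hχ : ActsThrough χ ⊤ A B) (hJ : ActsThrough χ J K B) :
    ∃ B' : LieSubmodule F L V, A ⊓ B' = K ∧ A ⊔ B' = B := by
  induction hflag with
  | top =>
    obtain ⟨a, ha, haK⟩ := SetLike.exists_of_lt hKA.lt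
    exact absurd ((hJ.isWeightVectorMod (hAB ha)).finrank_eq_add_one_of_covBy hKA ha haK) hrank
  | @step J J' hle hrankJ _ ih =>
    obtain ⟨c, -, -, hc, hspan⟩ := exists_isWeightVectorMod_of_finrank_eq_add_one hle hrankJ
    have hJA : ActsThrough χ J K A := fun j hj a ha => hJ j hj a (hAB ha)
    rcases hJA.forall_mem_or_injective_mod hc hKA with hzero | hinj
    · exact ih (hJ.of_forall_exists_sub_smul_mem hspan
        (hJ.twistedToEnd_mem_of_finrank_ne hχ hKA hrank hc hzero))
    · exact hJ.exists_complement_of_injective_mod hχ hAB hKA.le hc hinj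

end Flag

section Supplement

variable {F L : Type*} [Field F] [LieRing L] [LieAlgebra F L] {K A : LieIdeal F L}

/-- The elements of `L` leaving the line of `b` in `L / K` invariant. -/
def lineStabilizer (K : LieIdeal F L) (b : L) : LieSubalgebra F L where
  carrier := {y | ∃ r : F, ⁅y, b⁆ - r • b ∈ K}
  zero_mem' := ⟨0, by simp⟩
  add_mem' := by
    rintro x y ⟨r, hr⟩ ⟨s, hs⟩
    refine ⟨r + s, ?_⟩
    rw [add_lie, add_smul, add_sub_add_comm]
    exact add_mem hr hs
  smul_mem' := by
    rintro q x ⟨r, hr⟩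
    refine ⟨q * r, ?_⟩
    rw [smul_lie, mul_smul, ← smul_sub]
    exact K.smul_mem q hr
  lie_mem' := by
    rintro x y ⟨r, hr⟩ ⟨s, hs⟩
    refine ⟨0, ?_⟩
    have h : ⁅⁅x, y⁆, b⁆ - (0 : F) • b = ⁅x, ⁅y, b⁆ - s • b⁆ + s • (⁅x, b⁆ - r • b) -
        (⁅y, ⁅x, b⁆ - r • b⁆ + r • (⁅y, b⁆ - s • b)) := by
      rw [lie_lie, lie_sub, lie_sub, lie_smul, lie_smul]
      module
    rw [h]
    exact sub_mem (add_mem (K.lie_mem hs) (K.smul_mem s hr))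
      (add_mem (K.lie_mem hr) (K.smul_mem r hs))

theorem lineStabilizer_inf_eq {b : L} (hb : b ∉ A) (hKA : K ≤ A)
    (hinj : ∀ a ∈ A, ⁅b, a⁆ ∈ K → a ∈ K) :
    lineStabilizer K b ⊓ (A : LieSubalgebra F L) = (K : LieSubalgebra F L) := by
  refine le_antisymm ?_ fun x hx => ⟨⟨0, ?_⟩, hKA hx⟩
  · rintro a ⟨⟨r, hr⟩, ha⟩
    have hr0 : r = 0 := by
      by_contra hr0
      have h := sub_mem (lie_mem_left F L A a b ha) (hKA hr)
      rw [sub_sub_cancel] at h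
      exact hb ((A.toSubmodule.smul_mem_iff hr0).1 h)
    rw [hr0, zero_smul, sub_zero, ← lie_skew] at hr
    exact hinj a ha (neg_mem_iff.1 hr)
  · simpa using lie_mem_left F L K x b hx

theorem lineStabilizer_sup_eq_top [FiniteDimensional F L] {b : L} (hb : IsWeightVectorMod A b)
    (hinj : ∀ a ∈ A, ⁅b, a⁆ ∈ K → a ∈ K) :
    lineStabilizer K b ⊔ (A : LieSubalgebra F L) = ⊤ := by
  refine eq_top_iff.2 fun y _ => ?_
  obtain ⟨r, hr⟩ := hb y
  obtain ⟨a, ha, haK⟩ := exists_sub_apply_mem_of_injective_mod (K := K.toSubmodule)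
    (A := A.toSubmodule) (ad F L b) (fun _ => K.lie_mem) (fun _ => A.lie_mem) hinj hr
  have hya : y + a ∈ lineStabilizer K b := by
    refine ⟨r, ?_⟩
    rwa [add_lie, ← lie_skew a b, ← sub_eq_add_neg, sub_right_comm]
  have h := sub_mem ((le_sup_left : _ ≤ lineStabilizer K b ⊔ (A : LieSubalgebra F L)) hya)
    ((le_sup_right : _ ≤ lineStabilizer K b ⊔ (A : LieSubalgebra F L)) ha)
  rwa [add_sub_cancel_right] at h

end Supplement

section Barnes

variable {F L : Type*} [Field F] [LieRing L] [LieAlgebra F L] {K A B : LieIdeal F L}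

theorem lie_self_le_of_forall_exists_sub_smul_mem {b : L} (hb : b ∈ B)
    (hspan : ∀ x ∈ B, ∃ r : F, x - r • b ∈ A) (h : ⁅B, A⁆ ≤ K) : ⁅B, B⁆ ≤ K := by
  have hBA {x a : L} (hx : x ∈ B) (ha : a ∈ A) : ⁅x, a⁆ ∈ K :=
    h (LieSubmodule.lie_mem_lie hx ha)
  refine (LieSubmodule.lie_le_iff _ _ _).2 fun x hx y hy => ?_
  obtain ⟨r, hr⟩ := hspan x hx
  obtain ⟨s, hs⟩ := hspan y hy
  have hxy : ⁅x, y⁆ = ⁅x, y - s • b⁆ - s • ⁅b, x - r • b⁆ := by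
    simp only [lie_sub, lie_smul, lie_self, smul_zero, sub_zero, ← lie_skew b x, smul_neg]
    abel
  rw [hxy]
  exact sub_mem (hBA hx hs) (K.smul_mem s (hBA hb hr))

theorem toLieSubalgebra_sup_le {I J : LieIdeal F L} {M : LieSubalgebra F L}
    (hI : (I : LieSubalgebra F L) ≤ M) (hJ : (J : LieSubalgebra F L) ≤ M) :
    ((I ⊔ J : LieIdeal F L) : LieSubalgebra F L) ≤ M := by
  intro x hx
  obtain ⟨y, hy, z, hz, rfl⟩ := (LieSubmodule.mem_sup _ _ _).1 hx
  exact add_mem (hI hy) (hJ hz)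

theorem HasFlagAbove.exists_subalgebra_complement [FiniteDimensional F L] (hA : HasFlagAbove A)
    (hKA : K ⋖ A) (habel : ⁅A, A⁆ ≤ K)
    (hrank : Module.finrank F A ≠ Module.finrank F K + 1) :
    ∃ M : LieSubalgebra F L, M ⊓ (A : LieSubalgebra F L) = (K : LieSubalgebra F L) ∧
      M ⊔ (A : LieSubalgebra F L) = ⊤ := by
  induction hA generalizing K with
  | top =>
    obtain ⟨a, ha, haK⟩ := SetLike.exists_of_lt hKA.lt
    have hweight := (actsThrough_zero_iff_lie_le.2 habel).isWeightVectorMod ha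
    exact absurd (hweight.finrank_eq_add_one_of_covBy hKA ha haK) hrank
  | @step A B hAB hrankB hflag ih =>
    obtain ⟨b, hbB, hbA, hb, hspan⟩ := exists_isWeightVectorMod_of_finrank_eq_add_one hAB hrankB
    have habel' : ActsThrough 0 A K A := actsThrough_zero_iff_lie_le.2 habel
    rcases habel'.forall_mem_or_injective_mod hb hKA with hzero | hinj
    swap
    · have hinj' : ∀ a ∈ A, ⁅b, a⁆ ∈ K → a ∈ K := by
        simpa only [twistedToEnd_apply, LieHom.zero_apply, zero_smul, sub_zero] using hinj
      exact ⟨lineStabilizer K b, lineStabilizer_inf_eq hbA hKA.le hinj',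
        lineStabilizer_sup_eq_top hb hinj'⟩
    have hBB : ⁅B, B⁆ ≤ K := lie_self_le_of_forall_exists_sub_smul_mem hbB hspan <|
      actsThrough_zero_iff_lie_le.1 (habel'.of_forall_exists_sub_smul_mem hspan hzero)
    obtain ⟨χ, hχ⟩ := exists_actsThrough_top_of_finrank_eq_add_one hAB hrankB
    have hχB : ActsThrough χ B K B :=
      ActsThrough.of_lie_le (fun x _ => hχ x (LieSubmodule.mem_top x)) hBB hKA.le
        (lt_of_le_of_ne hAB fun h => hbA (h ▸ hbB))
    obtain ⟨B', hinf, hsup⟩ := hflag.exists_complement hKA hrank hAB hχ hχB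
    have hKB' : K ≤ B' := hinf ▸ inf_le_right
    have hcov : B' ⋖ B := hsup ▸ (hinf.symm ▸ hKA : A ⊓ B' ⋖ A).sup_of_inf_left
    have hdim := finrank_lieSubmodule_sup_add_finrank_inf A B'
    rw [hinf, hsup] at hdim
    obtain ⟨M, hMB, hM⟩ := ih hcov (hBB.trans hKB') (by omega)
    have hAB' : (A : LieSubalgebra F L) ≤ B := hAB
    have hB'M : (B' : LieSubalgebra F L) ≤ M := hMB ▸ inf_le_left
    refine ⟨M, ?_, top_le_iff.1 (hM ▸ sup_le le_sup_left ?_)⟩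
    · calc M ⊓ (A : LieSubalgebra F L) = M ⊓ B ⊓ A := by rw [inf_assoc, inf_eq_right.2 hAB']
        _ = (B' : LieSubalgebra F L) ⊓ A := by rw [hMB]
        _ = (A ⊓ B' : LieIdeal F L) := inf_comm _ _
        _ = K := by rw [hinf]
    · exact hsup ▸ toLieSubalgebra_sup_le le_sup_right (hB'M.trans le_sup_left)

end Barnes

section Frattini

variable {F L L' V : Type*} [Field F] [LieRing L] [LieAlgebra F L] [LieRing L'] [LieAlgebra F L']
  [AddCommGroup V] [Module F V] [LieRingModule L V] [LieModule F L V] {K A : LieIdeal F L}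

/-- A factor `A / K` of ideals of `L` is a Frattini factor if it lies in every maximal subalgebra
of `L / K`. -/
def IsFrattiniFactor (K A : LieIdeal F L) : Prop :=
  ∀ M : LieSubalgebra F L, IsCoatom M → (K : LieSubalgebra F L) ≤ M → (A : LieSubalgebra F L) ≤ M

theorem IsFrattiniFactor.eq_top_of_sup_eq_top [FiniteDimensional F L] (h : IsFrattiniFactor K A)
    {M : LieSubalgebra F L} (hKM : (K : LieSubalgebra F L) ≤ M)
    (hMA : M ⊔ (A : LieSubalgebra F L) = ⊤) : M = ⊤ := by
  refine (eq_top_or_exists_le_coatom M).resolve_right ?_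
  rintro ⟨M', hM', hMM'⟩
  exact hM'.1 (top_le_iff.1 (hMA ▸ sup_le hMM' (h M' hM' (hKM.trans hMM'))))

theorem engel_le_comap_engel (f : L →ₗ⁅F⁆ L') (x : L) :
    LieSubalgebra.engel F x ≤ (LieSubalgebra.engel F (f x)).comap f := by
  intro y hy
  obtain ⟨n, hn⟩ := (LieSubalgebra.mem_engel_iff F x y).1 hy
  have hpow : ((ad F L' (f x)) ^ n) (f y) = f (((ad F L x) ^ n) y) := by
    have h : Function.Semiconj f (ad F L x) (ad F L' (f x)) := fun z => f.map_lie x z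
    simpa only [Module.End.pow_apply] using (h.iterate_right n y).symm
  exact (LieSubalgebra.mem_engel_iff F _ _).2 ⟨n, hpow.trans (by rw [hn, map_zero])⟩

theorem engel_sup_eq_top_of_mem [FiniteDimensional F L] {x : L} (hx : x ∈ A) :
    LieSubalgebra.engel F x ⊔ (A : LieSubalgebra F L) = ⊤ := by
  obtain ⟨n, hn, hn0⟩ := ((ad F L x).eventually_isCompl_ker_pow_range_pow.and
    (Filter.eventually_ne_atTop 0)).exists
  refine eq_top_iff.2 fun z _ => ?_
  obtain ⟨u, hu, v, ⟨w, rfl⟩, rfl⟩ :=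
    Submodule.mem_sup.1 (hn.sup_eq_top ▸ Submodule.mem_top : z ∈ _)
  obtain ⟨m, rfl⟩ := Nat.exists_eq_add_one_of_ne_zero hn0
  refine add_mem ((le_sup_left : _ ≤ LieSubalgebra.engel F x ⊔ (A : LieSubalgebra F L)) ?_)
    ((le_sup_right : _ ≤ LieSubalgebra.engel F x ⊔ (A : LieSubalgebra F L)) ?_)
  · exact (LieSubalgebra.mem_engel_iff F x u).2 ⟨_, hu⟩
  · rw [pow_succ', Module.End.mul_apply]
    exact lie_mem_left F L A x _ hx

theorem IsFrattiniFactor.engel_eq_top [FiniteDimensional F L] (h : IsFrattiniFactor K A) {x : L}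
    (hx : x ∈ A) : LieSubalgebra.engel F (lieQuotMk K x) = ⊤ := by
  let M := (LieSubalgebra.engel F (lieQuotMk K x)).comap (lieQuotMk K)
  have hKM : (K : LieSubalgebra F L) ≤ M := fun z hz => by
    have hz0 : lieQuotMk K z = 0 := (LieSubmodule.Quotient.mk_eq_zero K).2 hz
    exact (LieSubalgebra.mem_comap _ _).2 (hz0 ▸ zero_mem _)
  have hMA : M ⊔ (A : LieSubalgebra F L) = ⊤ :=
    top_le_iff.1 (engel_sup_eq_top_of_mem hx ▸ sup_le_sup_right (engel_le_comap_engel _ x) _)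
  refine eq_top_iff.2 fun q _ => ?_
  obtain ⟨y, rfl⟩ := LieSubmodule.Quotient.surjective_mk' K q
  exact (h.eq_top_of_sup_eq_top hKM hMA).ge (LieSubalgebra.mem_top y)

theorem IsFrattiniFactor.isNilpotent_quotient [FiniteDimensional F L] (h : IsFrattiniFactor K A) :
    LieModule.IsNilpotent A (L ⧸ K) := by
  refine (LieModule.isNilpotent_iff_forall' (R := F)).2 fun x => ?_
  refine Module.End.isNilpotent_iff_of_finite.2 fun q => ?_
  have hq : q ∈ LieSubalgebra.engel F (lieQuotMk K (x : L)) :=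
    h.engel_eq_top x.2 ▸ LieSubalgebra.mem_top q
  exact (LieSubalgebra.mem_engel_iff F _ _).1 hq

theorem eq_bot_of_lie_eq_self {I : LieIdeal F L} [LieModule.IsNilpotent I V]
    {N : LieSubmodule F L V} (hN : ⁅I, N⁆ = N) : N = ⊥ := by
  have hlcs (k : ℕ) : N ≤ I.lcs V k := by
    induction k with
    | zero => exact le_top
    | succ k ih =>
      rw [LieIdeal.lcs_succ, ← hN]
      exact LieSubmodule.mono_lie_right I ih
  obtain ⟨k, hk⟩ := LieModule.IsNilpotent.nilpotent F I V
  refine le_bot_iff.1 ((hlcs k).trans_eq ?_)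
  rw [← LieSubmodule.toSubmodule_eq_bot, LieIdeal.coe_lcs_eq, hk, LieSubmodule.bot_toSubmodule]

theorem lie_le_of_covBy_of_isNilpotent_quotient {I : LieIdeal F L} {N P : LieSubmodule F L V}
    [LieModule.IsNilpotent I (V ⧸ N)] (hNP : N ⋖ P) : ⁅I, P⁆ ≤ N := by
  refine le_sup_left.trans ((hNP.eq_or_eq (le_sup_right : N ≤ ⁅I, P⁆ ⊔ N)
    (sup_le (LieSubmodule.lie_le_right _ _) hNP.le)).resolve_right fun hsup => ?_).le
  let π := LieSubmodule.Quotient.mk' N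
  have hfixed : ⁅I, P.map π⁆ = P.map π := by
    rw [← LieSubmodule.map_bracket_eq]
    conv_rhs => rw [← hsup, LieSubmodule.map_sup,
      (LieSubmodule.Quotient.map_mk'_eq_bot_le _ _).2 le_rfl, sup_bot_eq]
  exact hNP.lt.not_ge
    ((LieSubmodule.Quotient.map_mk'_eq_bot_le _ _).1 (eq_bot_of_lie_eq_self hfixed))

theorem HasFlagAbove.finrank_eq_add_one_of_isFrattiniFactor [FiniteDimensional F L]
    (hA : HasFlagAbove A) (hKA : K ⋖ A) (h : IsFrattiniFactor K A) :
    Module.finrank F A = Module.finrank F K + 1 := by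
  by_contra hrank
  have := h.isNilpotent_quotient
  have habel : ⁅A, A⁆ ≤ K := lie_le_of_covBy_of_isNilpotent_quotient hKA
  obtain ⟨M, hinf, hsup⟩ := hA.exists_subalgebra_complement hKA habel hrank
  have hM : M = ⊤ := h.eq_top_of_sup_eq_top (hinf ▸ inf_le_left) hsup
  rw [hM, top_inf_eq] at hinf
  exact hKA.lt.not_ge hinf.le

end Frattini

section Completion

variable {F L : Type*} [Field F] [LieRing L] [LieAlgebra F L]

theorem toLieSubalgebra_strictCore_le {B M : LieSubalgebra F L}
    (h : ∀ I : LieIdeal F L, (I : LieSubalgebra F L) < B → (I : LieSubalgebra F L) ≤ M) :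
    (strictCore B : LieSubalgebra F L) ≤ M := by
  rw [← LieSubalgebra.toSubmodule_le_toSubmodule, LieIdeal.toLieSubalgebra_toSubmodule, strictCore,
    LieSubmodule.sSup_toSubmodule]
  refine sSup_le ?_
  rintro _ ⟨I, hI, rfl⟩
  exact h I hI

theorem toLieSubalgebra_strictCore_le_self (B : LieSubalgebra F L) :
    (strictCore B : LieSubalgebra F L) ≤ B :=
  toLieSubalgebra_strictCore_le fun _ hI => hI.le

theorem le_strictCore {B : LieSubalgebra F L} {I : LieIdeal F L}
    (hI : (I : LieSubalgebra F L) < B) : I ≤ strictCore B :=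
  le_sSup hI

theorem finrank_quotCore_add_finrank_strictCore [FiniteDimensional F L] (B : LieSubalgebra F L) :
    Module.finrank F (quotCore B) + Module.finrank F (strictCore B) = Module.finrank F B := by
  have h := Submodule.finrank_quotient_add_finrank
    (LieIdeal.comap B.incl (strictCore B)).toSubmodule
  have hcomap : Module.finrank F (LieIdeal.comap B.incl (strictCore B)).toSubmodule =
      Module.finrank F (strictCore B) :=
    (Submodule.comapSubtypeEquivOfLe (p := (strictCore B).toSubmodule) (q := B.toSubmodule)
      (toLieSubalgebra_strictCore_le_self B)).finrank_eq
  rw [hcomap] at h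
  exact h

theorem IsCompletion.strictCore_covBy {M : LieSubalgebra F L} {C : LieIdeal F L}
    (hC : IsCompletion M (C : LieSubalgebra F L)) : strictCore (C : LieSubalgebra F L) ⋖ C := by
  have hle : strictCore (C : LieSubalgebra F L) ≤ C := toLieSubalgebra_strictCore_le_self _
  refine ⟨lt_of_le_of_ne hle fun h => hC.1 ?_, fun I hI hIC => hI.not_ge (le_strictCore hIC)⟩
  exact h ▸ toLieSubalgebra_strictCore_le hC.2

theorem exists_isCompletion_le [FiniteDimensional F L] {M : LieSubalgebra F L} {A : LieIdeal F L}
    (hAM : ¬ (A : LieSubalgebra F L) ≤ M) :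
    ∃ C : LieIdeal F L, C ≤ A ∧ IsCompletion M (C : LieSubalgebra F L) := by
  have : WellFoundedLT (LieIdeal F L) := LieSubmodule.wellFoundedLT_of_isArtinian F L L
  obtain ⟨C, ⟨hCA, hCM⟩, hmin⟩ := exists_minimal_of_wellFoundedLT
    (fun I : LieIdeal F L => I ≤ A ∧ ¬ (I : LieSubalgebra F L) ≤ M) ⟨A, le_rfl, hAM⟩
  refine ⟨C, hCA, hCM, fun I (hIC : I < C) => ?_⟩
  by_contra hIM
  exact hIC.not_ge (hmin ⟨hIC.le.trans hCA, hIM⟩ hIC.le)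

theorem exists_isCompletion_finrank_quotCore [FiniteDimensional F L] {K A : LieIdeal F L}
    {M : LieSubalgebra F L} (hKA : K ⋖ A) (hKM : (K : LieSubalgebra F L) ≤ M)
    (hAM : ¬ (A : LieSubalgebra F L) ≤ M) :
    ∃ C : LieIdeal F L, IsCompletion M (C : LieSubalgebra F L) ∧
      Module.finrank F (quotCore (C : LieSubalgebra F L)) + Module.finrank F K =
        Module.finrank F A := by
  obtain ⟨C, hCA, hC⟩ := exists_isCompletion_le hAM
  have hcoreM : (strictCore (C : LieSubalgebra F L) : LieSubalgebra F L) ≤ M :=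
    toLieSubalgebra_strictCore_le hC.2
  have hCK : ¬ C ≤ K := fun h => hC.1 (le_trans (show (C : LieSubalgebra F L) ≤ K from h) hKM)
  have hsup : C ⊔ K = A := (hKA.eq_or_eq le_sup_right (sup_le hCA hKA.le)).resolve_left fun h =>
    hCK (h ▸ le_sup_left)
  have hcoreK : strictCore (C : LieSubalgebra F L) ≤ K := by
    refine le_sup_left.trans ((hKA.eq_or_eq le_sup_right
      (sup_le (hC.strictCore_covBy.le.trans hCA) hKA.le)).resolve_right fun h => hAM ?_).le
    exact h ▸ toLieSubalgebra_sup_le hcoreM hKM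
  have hinf : C ⊓ K = strictCore (C : LieSubalgebra F L) :=
    le_antisymm (le_strictCore (show C ⊓ K < C from inf_lt_left.2 hCK))
      (le_inf hC.strictCore_covBy.le hcoreK)
  have hdim := finrank_lieSubmodule_sup_add_finrank_inf C K
  have hcore : _ = Module.finrank F C :=
    finrank_quotCore_add_finrank_strictCore (C : LieSubalgebra F L)
  rw [hsup, hinf] at hdim
  exact ⟨C, hC, by omega⟩

end Completion

/-- `L` is supersolvable if and only if for every maximal subalgebra `M` of `L`,
every ideal completion `C` of `M` satisfies `dim (C/k(C)) = 1`. -/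
theorem statement7 {F L : Type*} [Field F] [LieRing L] [LieAlgebra F L] [FiniteDimensional F L] :
    IsSupersolvableLieAlgebra F L ↔
      ∀ M : LieSubalgebra F L, IsCoatom M →
        ∀ C : LieIdeal F L, IsCompletion M (C : LieSubalgebra F L) →
          Module.finrank F (quotCore (C : LieSubalgebra F L)) = 1 := by
  rw [isSupersolvableLieAlgebra_iff_hasFlagAbove_bot]
  refine ⟨fun hflag M _ C hC => ?_, fun H => hasFlagAbove_bot_of_forall_covBy fun K A hA hKA => ?_⟩
  · have hchief := hflag.finrank_eq_add_one_of_inf_le hC.strictCore_covBy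
      ((inf_bot_eq C).trans_le bot_le)
    have hquot := finrank_quotCore_add_finrank_strictCore (C : LieSubalgebra F L)
    exact Nat.add_right_cancel (hquot.trans (hchief.trans (add_comm _ _)))
  · by_cases hfrattini : IsFrattiniFactor K A
    · exact hA.finrank_eq_add_one_of_isFrattiniFactor hKA hfrattini
    · simp only [IsFrattiniFactor, not_forall] at hfrattini
      obtain ⟨M, hM, hKM, hAM⟩ := hfrattini
      obtain ⟨C, hC, hdim⟩ := exists_isCompletion_finrank_quotCore hKA hKM hAM
      rw [H M hM C hC, add_comm] at hdim
      exact hdim.symm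
end
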